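/- arXiv:1802.07595 — 8 statements merged into one kernel-verified Lean document; each statement's English description precedes it below -/
import Mathlib

section
/- Let n ≥ 2, k ∈ {1,…,n−1}, s ∈ ℝⁿ and y ∈ {1,…,n}. Then the top-k hinge loss satisfies the reformulation: max{ (k-th largest entry of the vector ((1/k)·s with entry y removed) + 1) − (1/k)s_y , 0 } = max over all k-element subsets A of {1,…,n} of ( Δ_k(A,y) + (1/k)·Σ_{j∈A} s_j ) − max over all k-element subsets A of {1,…,n} with y ∈ A of ( (1/k)·Σ_{j∈A} s_j ). -/
/-!
Divide the labels other than `y` at the `k`-th largest score: `B` holds the `k - 1` labels with the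
largest scores and `c` carries the `k`-th largest one (`exists_topk_split`). A set whose scores
dominate all scores outside it has the largest sum among sets of the same size
(`sum_le_sum_of_threshold`), so the best `k`-set containing `y` is `{y} ∪ B`, and the best `k`-set
avoiding `y` is `{c} ∪ B`. With `a = s y / k`, `b = s c / k`, `β = (∑ j ∈ B, s j) / k`, the
right-hand side is therefore `max (a + β) (1 + b + β) - (a + β) = max (b + 1 - a) 0`.
-/

open Finset

/-- `kthLargest l p` is the `p`-th largest element of the list `l` (1-indexed). -/
noncomputable def kthLargest (l : List ℝ) (p : ℕ) : ℝ :=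
  (l.mergeSort (fun a b => decide (b ≤ a))).getD (p - 1) 0

/-- `Delta A y = 1` if `y ∉ A` and `0` otherwise. -/
noncomputable def Delta {n : ℕ} (A : Finset (Fin n)) (y : Fin n) : ℝ :=
  if y ∈ A then 0 else 1

/-- The elementary symmetric polynomial `σ_m(e)`. -/
noncomputable def esymm {ι : Type*} [Fintype ι] [DecidableEq ι] (e : ι → ℝ) (m : ℕ) : ℝ :=
  ∑ A ∈ (Finset.univ : Finset ι).powersetCard m, ∏ j ∈ A, e j

/-- The smooth top-k loss `L_{k,τ}(s, y)`. -/
noncomputable def smoothLoss (n k : ℕ) (τ : ℝ) (s : Fin n → ℝ) (y : Fin n) : ℝ :=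
  τ * Real.log (∑ A ∈ (Finset.univ : Finset (Fin n)).powersetCard k,
      Real.exp ((Delta A y + (1 / (k : ℝ)) * ∑ j ∈ A, s j) / τ))
  - τ * Real.log (∑ A ∈ ((Finset.univ : Finset (Fin n)).powersetCard k).filter (fun A => y ∈ A),
      Real.exp ((1 / ((k : ℝ) * τ)) * ∑ j ∈ A, s j))

lemma powersetCard_univ_nonempty {n k : ℕ} (hk : k ≤ n) :
    ((Finset.univ : Finset (Fin n)).powersetCard k).Nonempty := by
  rw [Finset.powersetCard_nonempty]
  simpa using hk

lemma powersetCard_mem_nonempty {n k : ℕ} (hk1 : 1 ≤ k) (hk : k ≤ n) (y : Fin n) :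
    (((Finset.univ : Finset (Fin n)).powersetCard k).filter (fun A => y ∈ A)).Nonempty := by
  obtain ⟨A, hyA, -, hcard⟩ := Finset.exists_subsuperset_card_eq
    (Finset.subset_univ ({y} : Finset (Fin n))) (by simpa using hk1) (by simpa using hk)
  exact ⟨A, by simp [Finset.mem_filter, Finset.mem_powersetCard, hcard,
    hyA (Finset.mem_singleton_self y)]⟩

/-- The (non-smooth) top-k hinge loss `l_k(s, y)` in its max-based reformulation. -/
noncomputable def hardLoss (n k : ℕ) (hk1 : 1 ≤ k) (hk : k ≤ n) (s : Fin n → ℝ) (y : Fin n) : ℝ :=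
  ((Finset.univ : Finset (Fin n)).powersetCard k).sup' (powersetCard_univ_nonempty hk)
      (fun A => Delta A y + (1 / (k : ℝ)) * ∑ j ∈ A, s j)
  - (((Finset.univ : Finset (Fin n)).powersetCard k).filter (fun A => y ∈ A)).sup'
      (powersetCard_mem_nonempty hk1 hk y) (fun A => (1 / (k : ℝ)) * ∑ j ∈ A, s j)

lemma sum_le_sum_of_threshold {ι : Type*} [DecidableEq ι] (s : ι → ℝ) (t : ℝ) (A B : Finset ι)
    (hcard : A.card = B.card) (hB : ∀ i ∈ B, t ≤ s i) (hA : ∀ i ∈ A, i ∉ B → s i ≤ t) :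
    ∑ j ∈ A, s j ≤ ∑ j ∈ B, s j := by
  -- As the cardinalities agree, it suffices to compare the sums of `s - t`, whose terms are
  -- nonnegative on `B` and nonpositive on `A \ B`.
  have h : ∑ j ∈ A, (s j - t) ≤ ∑ j ∈ B, (s j - t) := by
    rw [← Finset.sum_inter_add_sum_sdiff A B]
    have h1 : ∑ j ∈ A ∩ B, (s j - t) ≤ ∑ j ∈ B, (s j - t) :=
      Finset.sum_le_sum_of_subset_of_nonneg Finset.inter_subset_right
        fun i hi _ => sub_nonneg.2 (hB i hi)
    have h2 : ∑ j ∈ A \ B, (s j - t) ≤ 0 :=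
      Finset.sum_nonpos fun i hi => by
        rw [Finset.mem_sdiff] at hi
        exact sub_nonpos.2 (hA i hi.1 hi.2)
    linarith
  simp only [Finset.sum_sub_distrib, Finset.sum_const, hcard] at h
  linarith

/-- The labels other than `y` split at the `k`-th largest score: `c` attains it, and the `k - 1`
labels of `B` carry the scores preceding it in decreasing order. -/
lemma exists_topk_split (n k : ℕ) (hk1 : 1 ≤ k) (hkn : k ≤ n - 1) (s : Fin n → ℝ) (y : Fin n) :
    ∃ (B : Finset (Fin n)) (c : Fin n), B.card + 1 = k ∧ c ∉ B ∧ c ≠ y ∧ y ∉ B ∧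
      kthLargest ((List.ofFn (fun i => (1 / (k : ℝ)) * s i + 1)).eraseIdx y.val) k
        = (1 / (k : ℝ)) * s c + 1 ∧
      (∀ i ∈ B, s c ≤ s i) ∧ (∀ i, i ≠ y → i ∉ B → s i ≤ s c) := by
  have hk0 : (0 : ℝ) < 1 / (k : ℝ) := by
    have : (0 : ℝ) < k := by exact_mod_cast hk1
    positivity
  -- Sorting the labels by score, rather than the scores, keeps track of which label is where.
  set l : List (Fin n) := (List.finRange n).eraseIdx y.val with hl
  set r : Fin n → Fin n → Bool := fun i j => decide (s j ≤ s i) with hr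
  set L := l.mergeSort r with hL
  have hlist : (List.ofFn (fun i => (1 / (k : ℝ)) * s i + 1)).eraseIdx y.val
      = l.map (fun i => (1 / (k : ℝ)) * s i + 1) := by
    rw [hl, List.ofFn_eq_map, List.eraseIdx_map]
  have hsort : (l.map (fun i => (1 / (k : ℝ)) * s i + 1)).mergeSort (fun a b => decide (b ≤ a))
      = L.map (fun i => (1 / (k : ℝ)) * s i + 1) := by
    rw [hL]
    symm
    apply List.map_mergeSort
    intro a _ b _
    simp only [hr, add_le_add_iff_right, mul_le_mul_iff_right₀ hk0]
  have hperm : L.Perm l := List.mergeSort_perm _ _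
  have hlen : L.length = n - 1 := by
    rw [hperm.length_eq, hl, List.length_eraseIdx]
    simp
  have hnd : L.Nodup := by
    rw [hperm.nodup_iff, hl]
    exact (List.nodup_finRange n).eraseIdx _
  have hmem : ∀ i, i ∈ L ↔ i ≠ y := by
    intro i
    rw [hperm.mem_iff, hl]
    have : (List.finRange n).eraseIdx y.val = (List.finRange n).erase y := by
      rw [List.erase_eq_eraseIdx_of_idxOf]
      simp
    rw [this, (List.nodup_finRange n).mem_erase_iff]
    simp
  have hpw : L.Pairwise (fun i j => s j ≤ s i) := by
    have := List.pairwise_mergeSort (le := r)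
      (fun a b c h1 h2 => by simp only [hr, decide_eq_true_eq] at *; exact h2.trans h1)
      (fun a b => by simp only [hr, Bool.or_eq_true, decide_eq_true_eq]; exact le_total _ _) l
    simpa [hr] using this
  have hkL : k - 1 < L.length := by omega
  have hsplit : L = L.take (k - 1) ++ L[k - 1] :: L.drop (k - 1 + 1) := by
    rw [← List.drop_eq_getElem_cons hkL, List.take_append_drop]
  have hval : kthLargest ((List.ofFn (fun i => (1 / (k : ℝ)) * s i + 1)).eraseIdx y.val) k
      = (1 / (k : ℝ)) * s L[k - 1] + 1 := by
    rw [kthLargest, hlist, hsort, List.getD_eq_getElem _ _ (by simpa using hkL), List.getElem_map]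
  have htl : (L.take (k - 1)).length = k - 1 := by
    rw [List.length_take]; omega
  generalize L[k - 1] = c at *
  generalize L.take (k - 1) = P at *
  generalize L.drop (k - 1 + 1) = Q at *
  rw [hsplit] at hnd hpw hmem
  rw [List.pairwise_append, List.pairwise_cons] at hpw
  rw [List.nodup_append, List.nodup_cons] at hnd
  obtain ⟨-, ⟨hcQ, -⟩, hPc⟩ := hpw
  obtain ⟨hndP, -, hdis⟩ := hnd
  refine ⟨P.toFinset, c, ?_, ?_, ?_, ?_, hval, ?_, ?_⟩
  · rw [List.toFinset_card_of_nodup hndP]; omega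
  · rw [List.mem_toFinset]
    intro h
    exact hdis c h c (by simp) rfl
  · exact (hmem c).1 (by simp)
  · rw [List.mem_toFinset]
    intro h
    exact (hmem y).1 (by simp [h]) rfl
  · intro i hi
    exact hPc i (List.mem_toFinset.1 hi) c (by simp)
  · intro i hiy hi
    rw [List.mem_toFinset] at hi
    have h := (hmem i).2 hiy
    simp only [List.mem_append, List.mem_cons, hi, false_or] at h
    rcases h with rfl | h
    · exact le_rfl
    · exact hcQ i h

/-- Reformulation of the top-k hinge loss (Proposition 1). -/
theorem topk_hinge_reformulation (n k : ℕ) (hn : 2 ≤ n) (hk1 : 1 ≤ k) (hkn : k ≤ n - 1)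
    (s : Fin n → ℝ) (y : Fin n) :
    max (kthLargest ((List.ofFn (fun i => (1 / (k : ℝ)) * s i + 1)).eraseIdx y.val) k
        - (1 / (k : ℝ)) * s y) 0
      = hardLoss n k hk1 (by omega) s y := by
  obtain ⟨B, c, hBk, hcB, hcy, hyB, hval, hBc, hcB'⟩ := exists_topk_split n k hk1 hkn s y
  have hk0 : (0 : ℝ) ≤ 1 / (k : ℝ) := by positivity
  have hin : ∀ A : Finset (Fin n), A.card = k → y ∈ A →
      (1 / (k : ℝ)) * ∑ j ∈ A, s j ≤ (1 / (k : ℝ)) * (s y + ∑ j ∈ B, s j) := by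
    intro A hA hyA
    rw [← Finset.add_sum_erase A s hyA]
    have := sum_le_sum_of_threshold s (s c) (A.erase y) B
      (by rw [Finset.card_erase_of_mem hyA]; omega) hBc
      (fun i hi hiB => hcB' i (Finset.ne_of_mem_erase hi) hiB)
    gcongr
  have hout : ∀ A : Finset (Fin n), A.card = k → y ∉ A →
      (1 / (k : ℝ)) * ∑ j ∈ A, s j ≤ (1 / (k : ℝ)) * (s c + ∑ j ∈ B, s j) := by
    intro A hA hyA
    rw [← Finset.sum_insert hcB]
    have := sum_le_sum_of_threshold s (s c) A (insert c B)
      (by rw [Finset.card_insert_of_notMem hcB]; omega)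
      (by
        intro i hi
        rcases Finset.mem_insert.1 hi with rfl | hi
        · exact le_rfl
        · exact hBc i hi)
      (by
        intro i hi hiB
        exact hcB' i (fun h => hyA (h ▸ hi)) (fun h => hiB (Finset.mem_insert_of_mem h)))
    gcongr
  have hycard : (insert y B).card = k := by rw [Finset.card_insert_of_notMem hyB]; omega
  have hccard : (insert c B).card = k := by rw [Finset.card_insert_of_notMem hcB]; omega
  have hycB : y ∉ insert c B := by simp [hyB, hcy.symm]
  have h2 : (((Finset.univ : Finset (Fin n)).powersetCard k).filter (fun A => y ∈ A)).sup'
      (powersetCard_mem_nonempty hk1 (by omega) y) (fun A => (1 / (k : ℝ)) * ∑ j ∈ A, s j)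
      = (1 / (k : ℝ)) * (s y + ∑ j ∈ B, s j) := by
    apply le_antisymm
    · apply Finset.sup'_le
      intro A hA
      rw [Finset.mem_filter, Finset.mem_powersetCard] at hA
      exact hin A hA.1.2 hA.2
    · rw [← Finset.sum_insert hyB]
      exact Finset.le_sup' (fun A : Finset (Fin n) => (1 / (k : ℝ)) * ∑ j ∈ A, s j)
        (by simp [Finset.mem_powersetCard, hycard])
  have h1 : ((Finset.univ : Finset (Fin n)).powersetCard k).sup'
      (powersetCard_univ_nonempty (by omega))
      (fun A => Delta A y + (1 / (k : ℝ)) * ∑ j ∈ A, s j)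
      = max (1 + (1 / (k : ℝ)) * (s c + ∑ j ∈ B, s j))
          ((1 / (k : ℝ)) * (s y + ∑ j ∈ B, s j)) := by
    apply le_antisymm
    · apply Finset.sup'_le
      intro A hA
      rw [Finset.mem_powersetCard] at hA
      by_cases hyA : y ∈ A
      · simp only [Delta, if_pos hyA, zero_add]
        exact le_max_of_le_right (hin A hA.2 hyA)
      · simp only [Delta, if_neg hyA]
        exact le_max_of_le_left (by linarith [hout A hA.2 hyA])
    · apply max_le
      · have := Finset.le_sup' (s := (Finset.univ : Finset (Fin n)).powersetCard k)
          (fun A : Finset (Fin n) => Delta A y + (1 / (k : ℝ)) * ∑ j ∈ A, s j)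
          (b := insert c B) (by simp [Finset.mem_powersetCard, hccard])
        simpa only [Delta, if_neg hycB, Finset.sum_insert hcB] using this
      · have := Finset.le_sup' (s := (Finset.univ : Finset (Fin n)).powersetCard k)
          (fun A : Finset (Fin n) => Delta A y + (1 / (k : ℝ)) * ∑ j ∈ A, s j)
          (b := insert y B) (by simp [Finset.mem_powersetCard, hycard])
        simpa only [Delta, if_pos (Finset.mem_insert_self y B), zero_add,
          Finset.sum_insert hyB] using this
  rw [hardLoss, h1, h2, hval, ← max_sub_sub_right, sub_self]
  congr 1
  ring
end

section
/- Let n ≥ 2, k ∈ {1,…,n−1} with k+1 ≤ n, s ∈ ℝⁿ and y ∈ {1,…,n}. Assume s_[k−1] > s_[k], and assume in addition that either s_[k] > s_[k+1] or (1/k)·s_y > 1 + (1/k)·s_[k]. Then L_{k,τ}(s,y) tends to l_k(s,y) as τ tends to 0 from the right, where l_k(s,y) = max over all k-element subsets A of {1,…,n} of ( Δ_k(A,y) + (1/k)·Σ_{j∈A} s_j ) − max over all k-element subsets A with y ∈ A of ( (1/k)·Σ_{j∈A} s_j ). -/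
/-!
For a finite nonempty family `f` with maximum `M` over `N` indices, and `τ > 0`,
`exp (M / τ) ≤ ∑ exp (f i / τ) ≤ N * exp (M / τ)`, hence
`M ≤ τ * log (∑ exp (f i / τ)) ≤ M + τ * log N`. Squeezing as `τ → 0⁺` shows that each of the two
log-sum-exp terms of the smooth loss tends to the corresponding maximum in the hard loss
(`tendsto_mul_log_sum_exp`).
-/

open Finset

/-- The zero-temperature limit of log-sum-exp over a finite nonempty family is its maximum. -/
lemma tendsto_mul_log_sum_exp {ι : Type*} (S : Finset ι) (hS : S.Nonempty) (f : ι → ℝ) :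
    Filter.Tendsto (fun τ : ℝ => τ * Real.log (∑ i ∈ S, Real.exp (f i / τ)))
      (nhdsWithin 0 (Set.Ioi 0)) (nhds (S.sup' hS f)) := by
  have hupper : Filter.Tendsto (fun τ : ℝ => S.sup' hS f + τ * Real.log (S.card : ℝ))
      (nhdsWithin 0 (Set.Ioi 0)) (nhds (S.sup' hS f)) := by
    have hc : Continuous (fun τ : ℝ => S.sup' hS f + τ * Real.log (S.card : ℝ)) := by fun_prop
    simpa using (hc.tendsto 0).mono_left nhdsWithin_le_nhds
  refine tendsto_of_tendsto_of_tendsto_of_le_of_le' tendsto_const_nhds hupper ?_ ?_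
  · filter_upwards [self_mem_nhdsWithin] with τ hτ
    have hτ : 0 < τ := hτ
    obtain ⟨i, hi, hmax⟩ := S.exists_mem_eq_sup' hS f
    have hle : Real.exp (f i / τ) ≤ ∑ j ∈ S, Real.exp (f j / τ) :=
      Finset.single_le_sum (f := fun j => Real.exp (f j / τ))
        (fun j _ => (Real.exp_pos _).le) hi
    have hlog := Real.log_le_log (Real.exp_pos _) hle
    rw [Real.log_exp, div_le_iff₀ hτ] at hlog
    rw [hmax]
    linarith
  · filter_upwards [self_mem_nhdsWithin] with τ hτ
    have hτ : 0 < τ := hτ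
    have hcard : (0 : ℝ) < S.card := by exact_mod_cast hS.card_pos
    have hle : ∑ j ∈ S, Real.exp (f j / τ) ≤ S.card * Real.exp (S.sup' hS f / τ) := by
      rw [← nsmul_eq_mul]
      refine Finset.sum_le_card_nsmul _ _ _ fun j hj => ?_
      have hj' : f j ≤ S.sup' hS f := Finset.le_sup' f hj
      gcongr
    have hpos : 0 < ∑ j ∈ S, Real.exp (f j / τ) :=
      Finset.sum_pos (fun j _ => Real.exp_pos _) hS
    have hlog := Real.log_le_log hpos hle
    rw [Real.log_mul hcard.ne' (Real.exp_pos _).ne', Real.log_exp] at hlog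
    calc τ * Real.log (∑ j ∈ S, Real.exp (f j / τ))
        ≤ τ * (Real.log S.card + S.sup' hS f / τ) := by gcongr
      _ = S.sup' hS f + τ * Real.log S.card := by field_simp; ring

/-- Pointwise convergence of the smooth top-k loss to the hard top-k loss as `τ → 0⁺`
(Proposition 2). -/
theorem smoothLoss_tendsto_hardLoss (n k : ℕ) (hn : 2 ≤ n) (hk1 : 1 ≤ k) (hkn : k ≤ n - 1)
    (s : Fin n → ℝ) (y : Fin n)
    (h1 : kthLargest (List.ofFn s) k < kthLargest (List.ofFn s) (k - 1))
    (h2 : kthLargest (List.ofFn s) (k + 1) < kthLargest (List.ofFn s) k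
      ∨ 1 + (1 / (k : ℝ)) * kthLargest (List.ofFn s) k < (1 / (k : ℝ)) * s y) :
    Filter.Tendsto (fun τ : ℝ => smoothLoss n k τ s y)
      (nhdsWithin 0 (Set.Ioi 0)) (nhds (hardLoss n k hk1 (by omega) s y)) := by
  have hsmooth : (fun τ : ℝ => smoothLoss n k τ s y) = fun τ : ℝ =>
      τ * Real.log (∑ A ∈ (Finset.univ : Finset (Fin n)).powersetCard k,
        Real.exp ((Delta A y + (1 / (k : ℝ)) * ∑ j ∈ A, s j) / τ))
      - τ * Real.log
        (∑ A ∈ ((Finset.univ : Finset (Fin n)).powersetCard k).filter (fun A => y ∈ A),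
          Real.exp (((1 / (k : ℝ)) * ∑ j ∈ A, s j) / τ)) := by
    funext τ
    have hexp : ∀ x : ℝ, 1 / ((k : ℝ) * τ) * x = 1 / (k : ℝ) * x / τ := fun x => by
      rw [one_div, mul_inv, one_div, div_eq_mul_inv]
      ring
    simp only [smoothLoss, hexp]
  rw [hsmooth]
  exact (tendsto_mul_log_sum_exp _ _ _).sub (tendsto_mul_log_sum_exp _ _ _)
end

section
/- Let n ≥ 2, τ > 0, s ∈ ℝⁿ and y ∈ {1,…,n}. Then the smooth top-1 loss is an upper bound on the multi-class hinge loss: L_{1,τ}(s,y) ≥ max{ max_{j ≠ y} (s_j + 1) − s_y , 0 }. -/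
open Finset

/-- `Delta1 j y = 1` if `j ≠ y` and `0` otherwise. -/
noncomputable def Delta1 {n : ℕ} (j y : Fin n) : ℝ :=
  if j = y then 0 else 1

/-- The smooth top-1 loss is an upper bound on the multi-class hinge loss (Proposition 3,
case `k = 1`). -/
theorem smooth_top1_ge_hinge (n : ℕ) (hn : 2 ≤ n) (τ : ℝ) (hτ : 0 < τ)
    (s : Fin n → ℝ) (y : Fin n) :
    τ * Real.log (∑ j, Real.exp ((Delta1 j y + s j) / τ)) - s y
      ≥ max ((Finset.univ.erase y).sup'
          (by rw [← Finset.card_pos, Finset.card_erase_of_mem (Finset.mem_univ y),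
                Finset.card_univ, Fintype.card_fin]; omega)
          (fun j => s j + 1) - s y) 0 := by
  -- Log-sum-exp dominates each of its exponents: every summand is at most the whole sum.
  have key : ∀ j, Delta1 j y + s j ≤ τ * Real.log (∑ j, Real.exp ((Delta1 j y + s j) / τ)) := by
    intro j
    have h1 : Real.exp ((Delta1 j y + s j) / τ) ≤ ∑ j, Real.exp ((Delta1 j y + s j) / τ) :=
      Finset.single_le_sum (f := fun j => Real.exp ((Delta1 j y + s j) / τ))
        (fun i _ => (Real.exp_pos _).le) (Finset.mem_univ j)
    have h2 := (Real.le_log_iff_exp_le ((Real.exp_pos _).trans_le h1)).2 h1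
    rw [div_le_iff₀ hτ] at h2
    linarith
  refine max_le (sub_le_sub_right (Finset.sup'_le _ _ fun j hj => ?_) _) ?_
  · have h := key j
    have hd : Delta1 j y = 1 := by simp [Delta1, Finset.ne_of_mem_erase hj]
    linarith
  · have h := key y
    have hd : Delta1 y y = 0 := by simp [Delta1]
    linarith
end

section
/- Let k ≥ 2, n ≥ k+1 and τ > 0. Then there exist s ∈ ℝⁿ and y ∈ {1,…,n} such that L_{k,τ}(s,y) < l_k(s,y), where l_k(s,y) = max over all k-element subsets A of {1,…,n} of ( Δ_k(A,y) + (1/k)·Σ_{j∈A} s_j ) − max over all k-element subsets A with y ∈ A of ( (1/k)·Σ_{j∈A} s_j ). Hence L_{k,τ} is not an upper bound on l_k for any k ≥ 2. -/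
/-!
The witness puts a large score `a` on a set `T` of `k` labels avoiding `y`, and `0` elsewhere. With
`u = exp (a / (k τ))` and `c = exp (1 / τ)`, a set `A` contributes `u ^ |A ∩ T|` to the partition
sums, up to the margin factor `c` when `y ∉ A`. Among the sets avoiding `y` the largest term `u ^ k` occurs once (at `A = T`) and all
others are at most `u ^ (k - 1)`, while among the sets containing `y` the largest term
`u ^ (k - 1)` occurs `k ≥ 2` times. So for large `u` the ratio inside the logarithm of the smooth
loss is about `1 + c u / k`, less than `c u`, whose logarithm times `τ` is the hard loss `1 + a / k`.
The explicit choice `u = C + 3` with `C = n.choose k` is large enough.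
-/

open Finset

/-- A `k`-set other than the `k`-set `T` meets `T` in at most `k - 1` points. -/
lemma card_inter_lt_of_ne {α : Type*} [DecidableEq α] {A T : Finset α} {k : ℕ}
    (hA : A.card = k) (hT : T.card = k) (hne : A ≠ T) : (A ∩ T).card < k := by
  by_contra! h
  have h1 : A ∩ T = A := Finset.eq_of_subset_of_card_le Finset.inter_subset_left (by omega)
  have h2 : A ∩ T = T := Finset.eq_of_subset_of_card_le Finset.inter_subset_right (by omega)
  exact hne (h1.symm.trans h2)

/-- Among the `k`-sets avoiding `y`, only `T` attains the maximal weight `u ^ k`. -/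
lemma sum_notMem_le {α : Type*} [Fintype α] [DecidableEq α] {T : Finset α} {k : ℕ}
    (hT : T.card = k) (y : α) {u : ℝ} (hu : 1 ≤ u) :
    ∑ A ∈ ((Finset.univ : Finset α).powersetCard k).filter (fun A => y ∉ A),
        u ^ (A ∩ T).card
      ≤ u ^ k + ((Finset.univ : Finset α).powersetCard k).card * u ^ (k - 1) := by
  calc _ ≤ ∑ A ∈ (Finset.univ : Finset α).powersetCard k,
        ((if A = T then u ^ k else 0) + u ^ (k - 1)) := by
        refine (Finset.sum_le_sum (fun A hA => ?_)).trans
          (Finset.sum_le_sum_of_subset_of_nonneg (Finset.filter_subset _ _)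
            (fun A _ _ => by split_ifs <;> positivity))
        have hAk : A.card = k :=
          (Finset.mem_powersetCard.1 (Finset.mem_filter.1 hA).1).2
        split_ifs with h
        · subst h
          simp only [Finset.inter_self, hAk]
          have : 0 ≤ u ^ (k - 1) := by positivity
          linarith
        · rw [zero_add]
          exact pow_le_pow_right₀ hu (by have := card_inter_lt_of_ne hAk hT h; omega)
    _ = _ := by
        rw [Finset.sum_add_distrib, Finset.sum_ite_eq', if_pos (by simp [hT])]
        simp

/-- At least two `k`-sets containing `y` have weight `u ^ (k - 1)`: those obtained from `T` by
exchanging one of its elements for `y`. -/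
lemma two_mul_le_sum_mem {α : Type*} [Fintype α] [DecidableEq α] {T : Finset α} {k : ℕ}
    (hk : 2 ≤ k) (hT : T.card = k) {y : α} (hy : y ∉ T) {u : ℝ} (hu : 0 ≤ u) :
    2 * u ^ (k - 1) ≤
      ∑ A ∈ ((Finset.univ : Finset α).powersetCard k).filter (fun A => y ∈ A),
        u ^ (A ∩ T).card := by
  obtain ⟨a, ha, b, hb, hab⟩ := Finset.one_lt_card.1 (show 1 < T.card by omega)
  have hcard : ∀ t ∈ T, (insert y (T.erase t)).card = k := fun t ht => by
    rw [Finset.card_insert_of_notMem (fun h => hy (Finset.mem_of_mem_erase h)),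
      Finset.card_erase_of_mem ht]
    omega
  have hinter : ∀ t ∈ T, (insert y (T.erase t) ∩ T).card = k - 1 := fun t ht => by
    rw [Finset.insert_inter_of_notMem hy,
      Finset.inter_eq_left.2 (Finset.erase_subset t T), Finset.card_erase_of_mem ht, hT]
  have hne : insert y (T.erase a) ≠ insert y (T.erase b) := fun h => by
    have : a ∈ insert y (T.erase a) := by
      rw [h]; exact Finset.mem_insert_of_mem (Finset.mem_erase.2 ⟨hab, ha⟩)
    have hay : a ≠ y := fun h => hy (h ▸ ha)
    simp [hay] at this
  calc 2 * u ^ (k - 1)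
      = ∑ A ∈ {insert y (T.erase a), insert y (T.erase b)}, u ^ (A ∩ T).card := by
        rw [Finset.sum_pair hne, hinter a ha, hinter b hb]; ring
    _ ≤ _ := by
        refine Finset.sum_le_sum_of_subset_of_nonneg (fun A hA => ?_)
          (fun A _ _ => by positivity)
        rcases Finset.mem_insert.1 hA with rfl | hA
        · simp [hcard a ha]
        · rw [Finset.mem_singleton.1 hA]
          simp [hcard b hb]

/-- For `k ≥ 2`, the smooth top-k loss is not an upper bound on the hard top-k loss:
there exist scores and a label with `L_{k,τ}(s,y) < l_k(s,y)` (Proposition 3, case `k ≥ 2`). -/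
theorem smoothLoss_not_upper_bound (n k : ℕ) (hk : 2 ≤ k) (hn : k + 1 ≤ n)
    (τ : ℝ) (hτ : 0 < τ) :
    ∃ (s : Fin n → ℝ) (y : Fin n),
      smoothLoss n k τ s y < hardLoss n k (by omega) (by omega) s y := by
  obtain ⟨T, -, hT⟩ := Finset.exists_subset_card_eq
    (show k ≤ (Finset.univ : Finset (Fin n)).card by simp; omega)
  obtain ⟨y, hy⟩ : ∃ y, y ∉ T := by
    by_contra! h
    have := Finset.card_le_card (fun x _ => h x : (Finset.univ : Finset (Fin n)) ⊆ T)
    simp at this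
    omega
  set C : ℝ := (((Finset.univ : Finset (Fin n)).powersetCard k).card : ℝ) with hC
  have hC0 : 0 ≤ C := by positivity
  set u : ℝ := C + 3 with hu
  have hu0 : 0 < u := by positivity
  set c : ℝ := Real.exp (1 / τ) with hc
  have hc1 : 1 ≤ c := Real.one_le_exp (by positivity)
  have hk0 : (0 : ℝ) < k := by positivity
  set a : ℝ := k * τ * Real.log u with ha
  have ha0 : 0 ≤ a := by
    have := Real.log_nonneg (show 1 ≤ u by linarith)
    positivity
  have hsum : ∀ A : Finset (Fin n),
      ∑ j ∈ A, (if j ∈ T then a else 0) = (A ∩ T).card * a := fun A => by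
    rw [← Finset.sum_filter, Finset.filter_mem_eq_inter]; simp
  have hexp : ∀ A : Finset (Fin n),
      Real.exp ((1 / ((k : ℝ) * τ)) * ((A ∩ T).card * a)) = u ^ (A ∩ T).card := fun A => by
    rw [← Real.exp_log hu0, ← Real.exp_nat_mul, ha]
    congr 1
    field_simp
  refine ⟨fun j => if j ∈ T then a else 0, y, ?_⟩
  unfold smoothLoss hardLoss
  simp only [hsum, hexp]
  set S2 : ℝ := ∑ A ∈ ((Finset.univ : Finset (Fin n)).powersetCard k).filter (fun A => y ∈ A),
    u ^ (A ∩ T).card with hS2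
  set P : ℝ := ∑ A ∈ ((Finset.univ : Finset (Fin n)).powersetCard k).filter (fun A => y ∉ A),
    u ^ (A ∩ T).card with hP
  have hS1 : ∑ A ∈ (Finset.univ : Finset (Fin n)).powersetCard k,
      Real.exp ((Delta A y + (1 / (k : ℝ)) * ((A ∩ T).card * a)) / τ) = S2 + c * P := by
    rw [← Finset.sum_filter_add_sum_filter_not _ (fun A => y ∈ A), hS2, hP, Finset.mul_sum]
    congr 1
    · refine Finset.sum_congr rfl (fun A hA => ?_)
      rw [← hexp, Delta, if_pos (Finset.mem_filter.1 hA).2]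
      congr 1
      field_simp
      ring
    · refine Finset.sum_congr rfl (fun A hA => ?_)
      rw [← hexp, Delta, if_neg (Finset.mem_filter.1 hA).2, hc, ← Real.exp_add]
      congr 1
      field_simp
  rw [hS1]
  have hS2le : 2 * u ^ (k - 1) ≤ S2 := two_mul_le_sum_mem hk hT hy hu0.le
  have hPle : P ≤ u ^ k + C * u ^ (k - 1) := sum_notMem_le hT y (by linarith)
  have hv : 0 < u ^ (k - 1) := by positivity
  have hS2pos : 0 < S2 := by linarith
  have hP0 : 0 ≤ P := Finset.sum_nonneg (fun A _ => by positivity)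
  have hkey : S2 + c * P < S2 * (c * u) := by
    have huk : u ^ k = u * u ^ (k - 1) := by
      rw [← pow_succ']; congr 1; omega
    have h1 : 0 ≤ c * u - 1 := by nlinarith
    have h2 : 2 * u ^ (k - 1) * (c * u - 1) ≤ S2 * (c * u - 1) :=
      mul_le_mul_of_nonneg_right hS2le h1
    have h3 : c * P ≤ c * ((u + C) * u ^ (k - 1)) :=
      mul_le_mul_of_nonneg_left (by rw [huk] at hPle; linarith) (by linarith)
    -- After cancelling `u ^ (k - 1)` this reads `2 + c C < c u`, which is where `u = C + 3` is used.
    have h4 : 0 < u ^ (k - 1) * (2 * (c * u - 1) - c * (u + C)) :=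
      mul_pos hv (by rw [hu]; nlinarith)
    linarith
  have hlog : τ * Real.log (S2 + c * P) - τ * Real.log S2 < 1 + a / k := by
    have h := Real.log_lt_log (by positivity) hkey
    rw [Real.log_mul hS2pos.ne' (by positivity), Real.log_mul (by positivity) hu0.ne', hc,
      Real.log_exp] at h
    have h' := mul_lt_mul_of_pos_left h hτ
    have e : τ * (Real.log S2 + (1 / τ + Real.log u)) = τ * Real.log S2 + (1 + a / k) := by
      rw [ha]; field_simp
    linarith
  have hM1 : 1 + a ≤ ((Finset.univ : Finset (Fin n)).powersetCard k).sup'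
      (powersetCard_univ_nonempty (by omega))
      (fun A => Delta A y + (1 / (k : ℝ)) * ((A ∩ T).card * a)) := by
    refine le_trans (le_of_eq ?_) (Finset.le_sup' _ (show T ∈ _ by simp [hT]))
    simp only [Delta, if_neg hy, Finset.inter_self, hT]
    field_simp
  have hM2 : (((Finset.univ : Finset (Fin n)).powersetCard k).filter (fun A => y ∈ A)).sup'
      (powersetCard_mem_nonempty (by omega) (by omega) y)
      (fun A => (1 / (k : ℝ)) * ((A ∩ T).card * a)) ≤ a - a / k := by
    refine Finset.sup'_le _ _ (fun A hA => ?_)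
    obtain ⟨hA, hyA⟩ := Finset.mem_filter.1 hA
    have hlt : (A ∩ T).card + 1 ≤ k :=
      card_inter_lt_of_ne (Finset.mem_powersetCard.1 hA).2 hT (fun h => hy (h ▸ hyA))
    have hlt' : ((A ∩ T).card : ℝ) ≤ k - 1 := by
      have : ((A ∩ T).card : ℝ) + 1 ≤ k := by exact_mod_cast hlt
      linarith
    calc (1 / (k : ℝ)) * ((A ∩ T).card * a) ≤ (1 / (k : ℝ)) * ((k - 1) * a) := by gcongr
      _ = a - a / k := by field_simp
  linarith
end

section
/- Let n ≥ 2, k ∈ {1,…,n−1}, τ > 0, s ∈ ℝⁿ and y ∈ {1,…,n}. Assume there exists a k-element subset P of {1,…,n} with y ∉ P such that s_p ≥ s_q for every p ∈ P and every q ∉ P (i.e., P consists of k indices achieving the k largest scores and y is not among them). Then (1/k) · Σ_{A ⊆ {1,…,n}, |A|=k, y∈A} exp( (1/(kτ))·Σ_{j∈A} s_j ) ≤ Σ_{A ⊆ {1,…,n}, |A|=k, y∉A} exp( (1/(kτ))·Σ_{j∈A} s_j ). -/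
/-!
Given a `k`-set `A` containing `y`, the set `P` of top scores has `k` elements and is not
contained in `A` (otherwise `A = P` would miss `y`), so some `p ∈ P \ A` can replace `y`.
The exchange `A ↦ (A \ {y}) ∪ {p}` yields a `k`-set avoiding `y` whose weight is at least as large,
because `s y ≤ s p`. A target `B` arises from at most `k` sets `A`, since
`A = (B \ {p}) ∪ {y}` is determined by the choice of `p ∈ B`; summing over the fibres of the
exchange gives the factor `k`.
-/

open Finset

/-- If the ground-truth label `y` is not among a set `P` of `k` indices achieving the `k`
largest scores, then the sum of `exp`-score-products over `k`-subsets containing `y` is at most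
`k` times the corresponding sum over `k`-subsets not containing `y` (Lemma 3). -/
theorem sum_mem_le_k_mul_sum_not_mem (n k : ℕ) (hn : 2 ≤ n) (hk1 : 1 ≤ k) (hkn : k ≤ n - 1)
    (τ : ℝ) (hτ : 0 < τ) (s : Fin n → ℝ) (y : Fin n)
    (P : Finset (Fin n)) (hPcard : P.card = k) (hyP : y ∉ P)
    (htop : ∀ p ∈ P, ∀ q ∉ P, s q ≤ s p) :
    (1 / (k : ℝ)) * ∑ A ∈ ((Finset.univ : Finset (Fin n)).powersetCard k).filter
        (fun A => y ∈ A), Real.exp ((1 / ((k : ℝ) * τ)) * ∑ j ∈ A, s j)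
      ≤ ∑ A ∈ ((Finset.univ : Finset (Fin n)).powersetCard k).filter (fun A => y ∉ A),
          Real.exp ((1 / ((k : ℝ) * τ)) * ∑ j ∈ A, s j) := by
  classical
  have hk0 : (0 : ℝ) < k := by exact_mod_cast hk1
  set F : Finset (Fin n) → ℝ := fun A => Real.exp ((1 / ((k : ℝ) * τ)) * ∑ j ∈ A, s j) with hF
  have hexchange : ∀ A : Finset (Fin n), A.card = k → y ∈ A → ∃ p ∈ P, p ∉ A := by
    intro A hA hyA
    by_contra! hPA
    exact hyP (Finset.eq_of_subset_of_card_le hPA (by omega) ▸ hyA)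
  have : Nonempty (Fin n) := ⟨y⟩
  choose! p hpP hpA using hexchange
  set S := ((Finset.univ : Finset (Fin n)).powersetCard k).filter (fun A => y ∈ A) with hS
  set T := ((Finset.univ : Finset (Fin n)).powersetCard k).filter (fun A => y ∉ A) with hT
  set f : Finset (Fin n) → Finset (Fin n) := fun A => insert (p A) (A.erase y) with hf
  have hmemS : ∀ A, A ∈ S ↔ A.card = k ∧ y ∈ A := by
    intro A; simp [hS, Finset.mem_powersetCard]
  have hmemT : ∀ A, A ∈ T ↔ A.card = k ∧ y ∉ A := by
    intro A; simp [hT, Finset.mem_powersetCard]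
  have hmaps : ∀ A ∈ S, f A ∈ T := by
    intro A hA
    obtain ⟨hc, hy⟩ := (hmemS A).1 hA
    have hp := hpA A hc hy
    have hpy : y ≠ p A := fun h => hp (h ▸ hy)
    refine (hmemT _).2 ⟨?_, by simp [hf, hpy]⟩
    rw [hf, Finset.card_insert_of_notMem (by simp [hp]), Finset.card_erase_of_mem hy]
    omega
  have hle : ∀ A ∈ S, F A ≤ F (f A) := by
    intro A hA
    obtain ⟨hc, hy⟩ := (hmemS A).1 hA
    have hp := hpA A hc hy
    have hs := htop _ (hpP A hc hy) y hyP
    have hsum : ∑ j ∈ A, s j ≤ ∑ j ∈ f A, s j := by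
      rw [hf, Finset.sum_insert (by simp [hp]), ← Finset.add_sum_erase A s hy]
      linarith
    exact Real.exp_le_exp.2 (mul_le_mul_of_nonneg_left hsum (by positivity))
  have hfib : ∀ B ∈ T, (S.filter (fun A => f A = B)).card ≤ k := by
    intro B hB
    have hsub : S.filter (fun A => f A = B) ⊆ B.image (fun q => insert y (B.erase q)) := by
      intro A hA
      obtain ⟨hAS, rfl⟩ := Finset.mem_filter.1 hA
      obtain ⟨hc, hy⟩ := (hmemS A).1 hAS
      have hp := hpA A hc hy
      refine Finset.mem_image.2 ⟨p A, by simp [hf], ?_⟩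
      simp only [hf]
      rw [Finset.erase_insert (by simp [hp]), Finset.insert_erase hy]
    calc _ ≤ _ := Finset.card_le_card hsub
      _ ≤ B.card := Finset.card_image_le
      _ = k := ((hmemT B).1 hB).1
  have hmain : ∑ A ∈ S, F A ≤ k * ∑ B ∈ T, F B := by
    calc ∑ A ∈ S, F A ≤ ∑ A ∈ S, F (f A) := Finset.sum_le_sum hle
      _ = ∑ B ∈ T, ∑ A ∈ S with f A = B, F (f A) :=
        (Finset.sum_fiberwise_of_maps_to hmaps _).symm
      _ ≤ ∑ B ∈ T, k * F B := by
        refine Finset.sum_le_sum fun B hB => ?_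
        rw [Finset.sum_congr rfl (g := fun _ => F B)
          (fun A hA => by rw [(Finset.mem_filter.1 hA).2]), Finset.sum_const, nsmul_eq_mul]
        exact mul_le_mul_of_nonneg_right (by exact_mod_cast hfib B hB) (Real.exp_pos _).le
      _ = k * ∑ B ∈ T, F B := (Finset.mul_sum _ _ _).symm
  rw [one_div, inv_mul_le_iff₀ hk0]
  exact hmain
end

section
/- Let n ≥ 2, k ∈ {1,…,n−1}, τ > 0, s ∈ ℝⁿ and y ∈ {1,…,n}. Then the smooth top-k loss is, up to a scaling factor, an upper bound on the top-k prediction loss: L_{k,τ}(s,y) ≥ (1 − τ·log k) · Λ_k(s,y). -/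
/-!
Write `w A = exp ((1 / (k τ)) ∑_{j ∈ A} s j)` and let `S_in`, `S_out` be the sums of `w` over the
`k`-subsets that contain, respectively avoid, `y`. Then
`smoothLoss = τ log (S_in + exp (1/τ) S_out) - τ log S_in`, which is visibly nonnegative.

If at least `k` scores exceed `s y`, then `S_in ≤ k S_out` (`sum_mem_le_mul_sum_notMem`): in a
`k`-set `A` containing `y`, replace `y` by some `j ∉ A` with `s y < s j`, which exists because
`A \ {y}` has only `k - 1` elements. This exchange does not decrease `w`, and each `k`-set `A'`
avoiding `y` arises at most `k` times, since `A` is recovered from `A'` and the element `j ∈ A'`.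
Hence `S_in + exp (1/τ) S_out ≥ exp (1/τ) S_in / k`; taking logarithms gives `1 - τ log k`.
-/

open Finset

/-- The exchange inequality `S_in ≤ k S_out`, with a general scale `c ≥ 0` in place of
`1 / (k τ)`. -/
lemma sum_mem_le_mul_sum_notMem {n k : ℕ} (c : ℝ) (hc : 0 ≤ c) (s : Fin n → ℝ) (y : Fin n)
    (h : k ≤ (Finset.univ.filter (fun j => s y < s j)).card) :
    ∑ A ∈ ((Finset.univ : Finset (Fin n)).powersetCard k).filter (fun A => y ∈ A),
        Real.exp (c * ∑ j ∈ A, s j)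
      ≤ k * ∑ A ∈ ((Finset.univ : Finset (Fin n)).powersetCard k).filter (fun A => y ∉ A),
        Real.exp (c * ∑ j ∈ A, s j) := by
  have hex : ∀ A : Finset (Fin n), ∃ j, A.card = k → y ∈ A → s y < s j ∧ j ∉ A := by
    intro A
    by_cases hA : A.card = k ∧ y ∈ A
    · obtain ⟨hA, hy⟩ := hA
      have hlt : (A.erase y).card < (Finset.univ.filter (fun j => s y < s j)).card := by
        have := Finset.card_erase_lt_of_mem hy
        omega
      obtain ⟨j, hj, hjA⟩ := Finset.exists_mem_notMem_of_card_lt_card hlt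
      have hj' : s y < s j := by simpa using hj
      refine ⟨j, fun _ _ => ⟨hj', fun hmem => hjA (Finset.mem_erase.2 ⟨?_, hmem⟩)⟩⟩
      rintro rfl
      exact lt_irrefl _ hj'
    · exact ⟨y, fun h1 h2 => absurd ⟨h1, h2⟩ hA⟩
  choose f hf using hex
  have hmem : ∀ A, A ∈ ((Finset.univ : Finset (Fin n)).powersetCard k).filter (fun A => y ∈ A) →
      A.card = k ∧ y ∈ A := by
    intro A hA
    simpa [Finset.mem_powersetCard] using hA
  -- `φ` exchanges `y` for the chosen element `f A`.
  set φ : Finset (Fin n) → Finset (Fin n) := fun A => insert (f A) (A.erase y) with hφ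
  have hmaps : ∀ A ∈ ((Finset.univ : Finset (Fin n)).powersetCard k).filter (fun A => y ∈ A),
      φ A ∈ ((Finset.univ : Finset (Fin n)).powersetCard k).filter (fun A => y ∉ A) := by
    intro A hA
    obtain ⟨hc1, hy⟩ := hmem A hA
    obtain ⟨hlt, hnot⟩ := hf A hc1 hy
    have hne : y ≠ f A := by
      intro heq
      exact hnot (heq ▸ hy)
    have hcard : (insert (f A) (A.erase y)).card = k := by
      rw [Finset.card_insert_of_notMem (fun hm => hnot (Finset.mem_of_mem_erase hm)),
        Finset.card_erase_add_one hy, hc1]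
    simp [hφ, Finset.mem_powersetCard, hcard, hne]
  have hle : ∀ A ∈ ((Finset.univ : Finset (Fin n)).powersetCard k).filter (fun A => y ∈ A),
      Real.exp (c * ∑ j ∈ A, s j) ≤ Real.exp (c * ∑ j ∈ φ A, s j) := by
    intro A hA
    obtain ⟨hc1, hy⟩ := hmem A hA
    obtain ⟨hlt, hnot⟩ := hf A hc1 hy
    refine Real.exp_le_exp.2 (mul_le_mul_of_nonneg_left ?_ hc)
    rw [hφ, Finset.sum_insert (fun hm => hnot (Finset.mem_of_mem_erase hm)),
      ← Finset.add_sum_erase A s hy]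
    linarith
  refine (Finset.sum_le_sum hle).trans ?_
  rw [← Finset.sum_fiberwise_of_maps_to hmaps, Finset.mul_sum]
  refine Finset.sum_le_sum fun B hB => ?_
  have hB' : B.card = k := by
    have : B.card = k ∧ y ∉ B := by simpa [Finset.mem_powersetCard] using hB
    exact this.1
  -- The fibre of `φ` over `B` lies in the image of `j ↦ insert y (B.erase j)` on `B`.
  have hfib : ((((Finset.univ : Finset (Fin n)).powersetCard k).filter (fun A => y ∈ A)).filter
      (fun A => φ A = B)).card ≤ k := by
    rw [← hB']
    refine (Finset.card_le_card ?_).trans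
      (Finset.card_image_le (s := B) (f := fun j => insert y (B.erase j)))
    intro A hA
    obtain ⟨hA1, hA2⟩ := Finset.mem_filter.1 hA
    rw [hB'] at hA1
    obtain ⟨hc1, hy⟩ := hmem A hA1
    obtain ⟨hlt, hnot⟩ := hf A hc1 hy
    refine Finset.mem_image.2 ⟨f A, ?_, ?_⟩
    · rw [← hA2]
      exact Finset.mem_insert_self _ _
    · rw [← hA2]
      simp only [hφ]
      rw [Finset.erase_insert (fun hm => hnot (Finset.mem_of_mem_erase hm)),
        Finset.insert_erase hy]
  rw [Finset.sum_congr rfl (g := fun _ => Real.exp (c * ∑ j ∈ B, s j))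
    (fun A hA => by rw [(Finset.mem_filter.1 hA).2]), Finset.sum_const, nsmul_eq_mul]
  exact mul_le_mul_of_nonneg_right (by exact_mod_cast hfib) (Real.exp_pos _).le

/-- The smooth top-k loss is, up to a scaling factor, an upper bound on the top-k prediction
loss: `L_{k,τ}(s,y) ≥ (1 - τ log k) Λ_k(s,y)` (Proposition 4). -/
theorem smoothLoss_ge_prediction_loss (n k : ℕ) (hn : 2 ≤ n) (hk1 : 1 ≤ k) (hkn : k ≤ n - 1)
    (τ : ℝ) (hτ : 0 < τ) (s : Fin n → ℝ) (y : Fin n) :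
    smoothLoss n k τ s y
      ≥ (1 - τ * Real.log k) *
        (if k ≤ (Finset.univ.filter (fun j => s y < s j)).card then (1 : ℝ) else 0) := by
  have hkpos : (0 : ℝ) < k := by exact_mod_cast hk1
  -- The factor `exp (Δ / τ)` is `1` on the sets containing `y` and `exp (1 / τ)` on the others.
  have hsplit : ∑ A ∈ (Finset.univ : Finset (Fin n)).powersetCard k,
      Real.exp ((Delta A y + (1 / (k : ℝ)) * ∑ j ∈ A, s j) / τ)
      = ∑ A ∈ ((Finset.univ : Finset (Fin n)).powersetCard k).filter (fun A => y ∈ A),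
          Real.exp ((1 / ((k : ℝ) * τ)) * ∑ j ∈ A, s j)
        + Real.exp (1 / τ) *
          ∑ A ∈ ((Finset.univ : Finset (Fin n)).powersetCard k).filter (fun A => y ∉ A),
            Real.exp ((1 / ((k : ℝ) * τ)) * ∑ j ∈ A, s j) := by
    rw [← Finset.sum_filter_add_sum_filter_not _ (fun A => y ∈ A), Finset.mul_sum]
    congr 1
    · refine Finset.sum_congr rfl fun A hA => ?_
      rw [Delta, if_pos (Finset.mem_filter.1 hA).2]
      congr 1
      field_simp
      ring
    · refine Finset.sum_congr rfl fun A hA => ?_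
      rw [Delta, if_neg (Finset.mem_filter.1 hA).2, ← Real.exp_add]
      congr 1
      field_simp
  have hin : 0 < ∑ A ∈ ((Finset.univ : Finset (Fin n)).powersetCard k).filter (fun A => y ∈ A),
      Real.exp ((1 / ((k : ℝ) * τ)) * ∑ j ∈ A, s j) :=
    Finset.sum_pos (fun _ _ => Real.exp_pos _) (powersetCard_mem_nonempty hk1 (by omega) y)
  have hout : 0 ≤ ∑ A ∈ ((Finset.univ : Finset (Fin n)).powersetCard k).filter (fun A => y ∉ A),
      Real.exp ((1 / ((k : ℝ) * τ)) * ∑ j ∈ A, s j) :=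
    Finset.sum_nonneg (fun _ _ => (Real.exp_pos _).le)
  have hexch := sum_mem_le_mul_sum_notMem (k := k) (1 / ((k : ℝ) * τ)) (by positivity) s y
  rw [smoothLoss, hsplit]
  generalize ∑ A ∈ ((Finset.univ : Finset (Fin n)).powersetCard k).filter (fun A => y ∈ A),
      Real.exp ((1 / ((k : ℝ) * τ)) * ∑ j ∈ A, s j) = P at *
  generalize ∑ A ∈ ((Finset.univ : Finset (Fin n)).powersetCard k).filter (fun A => y ∉ A),
      Real.exp ((1 / ((k : ℝ) * τ)) * ∑ j ∈ A, s j) = Q at *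
  have hE := Real.exp_pos (1 / τ)
  split_ifs with h
  · have hPQ := hexch h
    have hle : Real.exp (1 / τ) * (P / k) ≤ P + Real.exp (1 / τ) * Q := by
      have h1 : P / k ≤ Q := by
        rw [div_le_iff₀ hkpos]
        linarith
      have h2 := mul_le_mul_of_nonneg_left h1 hE.le
      linarith
    have hlog := Real.log_le_log (by positivity) hle
    rw [Real.log_mul hE.ne' (by positivity), Real.log_exp,
      Real.log_div hin.ne' hkpos.ne'] at hlog
    have h3 := mul_le_mul_of_nonneg_left hlog hτ.le
    have h4 : τ * (1 / τ + (Real.log P - Real.log k))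
        = 1 + τ * Real.log P - τ * Real.log k := by
      field_simp
      ring
    linarith
  · have hlog := Real.log_le_log hin (le_add_of_nonneg_right (mul_nonneg hE.le hout))
    have h3 := mul_le_mul_of_nonneg_left hlog hτ.le
    linarith
end

section
/- Let n ≥ 2, k ∈ {1,…,n−1}, τ > 0, s ∈ ℝⁿ and y ∈ {1,…,n}. Let E ∈ ℝ^{n−1} be the vector with entries E_j = exp(s_j/(kτ)) for j ≠ y. Then L_{k,τ}(s,y) = τ·log( exp(s_y/(kτ))·σ_{k−1}(E) + exp(1/τ)·σ_k(E) ) − τ·log( exp(s_y/(kτ))·σ_{k−1}(E) ). -/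
/-!
Writing `E j = exp (s j / (k τ))`, each exponential in the loss is the product of the `E j` over
`j ∈ A`, multiplied by `exp (1 / τ)` when `y ∉ A`. Splitting the `k`-subsets `A` according to
whether `y ∈ A` then gives the two terms: those containing `y` contribute `E y * σ_{k-1}`
(`sum_powersetCard_mem`), those avoiding `y` contribute `σ_k` (`sum_powersetCard_notMem`).
-/

open Finset

/-- Elementary symmetric sums over the subtype `{j // j ≠ y}` are sums over subsets of
`univ.erase y`. -/
lemma esymm_subtype_ne {n : ℕ} (f : Fin n → ℝ) (y : Fin n) (m : ℕ) :
    esymm (fun j : {j : Fin n // j ≠ y} => f j) m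
      = ∑ A ∈ (univ.erase y).powersetCard m, ∏ j ∈ A, f j := by
  have h : (univ.erase y : Finset (Fin n))
      = (univ : Finset {j : Fin n // j ≠ y}).map (Function.Embedding.subtype _) := by
    ext j
    simp
  rw [h, powersetCard_map, sum_map]
  simp [esymm, mapEmbedding_apply]

/-- The `k`-subsets containing `y` are the sets `insert y B` with `B` a `(k-1)`-subset avoiding
`y`, so the product over `A` factors as `f y` times the product over `B`. -/
lemma sum_powersetCard_mem {n k : ℕ} (hk : 1 ≤ k) (f : Fin n → ℝ) (y : Fin n) :
    ∑ A ∈ (univ : Finset (Fin n)).powersetCard k with y ∈ A, ∏ j ∈ A, f j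
      = f y * esymm (fun j : {j : Fin n // j ≠ y} => f j) (k - 1) := by
  rw [esymm_subtype_ne, mul_sum]
  symm
  refine sum_bij' (fun B _ => insert y B) (fun A _ => A.erase y) ?_ ?_ ?_ ?_ ?_
  · intro B hB
    rw [mem_powersetCard, subset_erase] at hB
    simp [card_insert_of_notMem hB.1.2, hB.2, hk]
  · intro A hA
    rw [mem_filter, mem_powersetCard] at hA
    rw [mem_powersetCard, card_erase_of_mem hA.2, hA.1.2]
    exact ⟨erase_subset_erase y hA.1.1, rfl⟩
  · intro B hB
    rw [mem_powersetCard, subset_erase] at hB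
    exact erase_insert hB.1.2
  · intro A hA
    exact insert_erase (mem_filter.1 hA).2
  · intro B hB
    rw [mem_powersetCard, subset_erase] at hB
    rw [prod_insert hB.1.2]

lemma sum_powersetCard_notMem {n : ℕ} (k : ℕ) (f : Fin n → ℝ) (y : Fin n) :
    ∑ A ∈ (univ : Finset (Fin n)).powersetCard k with y ∉ A, ∏ j ∈ A, f j
      = esymm (fun j : {j : Fin n // j ≠ y} => f j) k := by
  rw [esymm_subtype_ne]
  refine sum_congr ?_ fun _ _ => rfl
  ext A
  simp [mem_powersetCard, subset_erase, and_comm]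

/-- The smooth top-k loss expressed via elementary symmetric polynomials of
`E_j = exp(s_j/(kτ))`, `j ≠ y` (equation (11)). -/
theorem smoothLoss_eq_esymm (n k : ℕ) (hn : 2 ≤ n) (hk1 : 1 ≤ k) (hkn : k ≤ n - 1)
    (τ : ℝ) (hτ : 0 < τ) (s : Fin n → ℝ) (y : Fin n) :
    smoothLoss n k τ s y
      = τ * Real.log (Real.exp (s y / ((k : ℝ) * τ))
            * esymm (fun j : {j : Fin n // j ≠ y} => Real.exp (s j / ((k : ℝ) * τ))) (k - 1)
          + Real.exp (1 / τ)
            * esymm (fun j : {j : Fin n // j ≠ y} => Real.exp (s j / ((k : ℝ) * τ))) k)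
        - τ * Real.log (Real.exp (s y / ((k : ℝ) * τ))
            * esymm (fun j : {j : Fin n // j ≠ y} => Real.exp (s j / ((k : ℝ) * τ))) (k - 1)) := by
  have hexp : ∀ A : Finset (Fin n), Real.exp ((1 / ((k : ℝ) * τ)) * ∑ j ∈ A, s j)
      = ∏ j ∈ A, Real.exp (s j / ((k : ℝ) * τ)) := by
    intro A
    rw [← Real.exp_sum, ← sum_div, one_div_mul_eq_div]
  have hsplit : ∀ A : Finset (Fin n),
      Real.exp ((Delta A y + (1 / (k : ℝ)) * ∑ j ∈ A, s j) / τ)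
        = Real.exp (Delta A y / τ) * ∏ j ∈ A, Real.exp (s j / ((k : ℝ) * τ)) := by
    intro A
    rw [← hexp, ← Real.exp_add]
    congr 1
    field_simp
  have hmem := sum_powersetCard_mem hk1 (fun j => Real.exp (s j / ((k : ℝ) * τ))) y
  have hnot := sum_powersetCard_notMem k (fun j => Real.exp (s j / ((k : ℝ) * τ))) y
  unfold smoothLoss
  simp only [hexp, hsplit]
  rw [← sum_filter_add_sum_filter_not _ (fun A => y ∈ A), ← hmem, ← hnot, mul_sum]
  congr 3
  congr 1
  · refine sum_congr rfl fun A hA => ?_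
    simp [Delta, (mem_filter.1 hA).2]
  · refine sum_congr rfl fun A hA => ?_
    simp [Delta, (mem_filter.1 hA).2]
end

section
/- Let n ≥ 2, k ∈ {1,…,n−1}, e ∈ ℝⁿ with all entries strictly positive, i ∈ {1,…,n}, and p ∈ {0,…,n−k}. Define the p-th order approximation to the partial derivative δ_{k,i} = σ_{k−1}(e_{∖i}) by δ̃^{(p)}_{k,i} = Σ_{j=0}^{p} (−1)^j · σ_{k+j}(e) / e_i^{j+1}. Then the absolute approximation error satisfies | σ_{k−1}(e_{∖i}) − δ̃^{(p)}_{k,i} | = σ_{k+p}(e_{∖i}) / e_i^{p+1}. -/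
/-!
Splitting the subsets according to whether they contain `i` gives
`σ_{m+1}(e) = σ_{m+1}(e_{∖i}) + e_i σ_m(e_{∖i})` (`esymm_succ_eq`). Substituting this for each
`σ_{k+j}(e)` makes the alternating sum telescope, so the signed error is exactly
`(-1)^{p+1} σ_{k+p}(e_{∖i}) / e_i^{p+1}` (`esymm_signed_error`). Positivity of the entries
then gives its absolute value.
-/

open Finset

/-- `σ_m(e_{∖i})`, indexed by a subtype, as a sum over the `m`-subsets of `univ.erase i`. -/
theorem esymm_subtype_eq {n : ℕ} (e : Fin n → ℝ) (i : Fin n) (m : ℕ) :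
    esymm (fun q : {q : Fin n // q ≠ i} => e q) m
      = ∑ A ∈ (Finset.univ.erase i).powersetCard m, ∏ j ∈ A, e j := by
  have h : Finset.univ.erase i
      = (Finset.univ : Finset {q : Fin n // q ≠ i}).map (Function.Embedding.subtype _) := by
    ext x
    simp
  rw [h, Finset.powersetCard_map, Finset.sum_map]
  simp [esymm]

theorem esymm_succ_eq {n : ℕ} (e : Fin n → ℝ) (i : Fin n) (m : ℕ) :
    esymm e (m + 1) = esymm (fun q : {q : Fin n // q ≠ i} => e q) (m + 1)
      + e i * esymm (fun q : {q : Fin n // q ≠ i} => e q) m := by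
  have hi : ∀ A ∈ (Finset.univ.erase i).powersetCard m, i ∉ A := fun A hA hiA =>
    Finset.notMem_erase i _ ((Finset.mem_powersetCard.1 hA).1 hiA)
  rw [esymm_subtype_eq, esymm_subtype_eq, esymm, ← Finset.insert_erase (Finset.mem_univ i),
    Finset.powersetCard_succ_insert (Finset.notMem_erase _ _), Finset.sum_union,
    Finset.sum_image, Finset.mul_sum, Finset.erase_insert (Finset.notMem_erase _ _)]
  · congr 1
    exact Finset.sum_congr rfl fun A hA => Finset.prod_insert (hi A hA)
  · intro A hA B hB hAB
    rw [← Finset.erase_insert (hi A hA), ← Finset.erase_insert (hi B hB)]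
    exact congrArg (fun S => Finset.erase S i) hAB
  · rw [Finset.disjoint_left]
    intro A hA hA'
    obtain ⟨B, -, rfl⟩ := Finset.mem_image.1 hA'
    exact Finset.notMem_erase i _
      ((Finset.mem_powersetCard.1 hA).1 (Finset.mem_insert_self i B))

/-- The error with its sign, for the order `m + 1` in place of `k`. -/
theorem esymm_signed_error {n : ℕ} (e : Fin n → ℝ) (i : Fin n) (hi : e i ≠ 0) (m p : ℕ) :
    esymm (fun q : {q : Fin n // q ≠ i} => e q) m
        - ∑ j ∈ Finset.range (p + 1), (-1 : ℝ) ^ j * esymm e (m + 1 + j) / e i ^ (j + 1)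
      = (-1) ^ (p + 1)
        * (esymm (fun q : {q : Fin n // q ≠ i} => e q) (m + 1 + p) / e i ^ (p + 1)) := by
  induction p with
  | zero =>
    simp only [zero_add, Finset.sum_range_one, add_zero, esymm_succ_eq e i m]
    field_simp
    ring
  | succ p ih =>
    rw [Finset.sum_range_succ, ← sub_sub, ih, ← add_assoc (m + 1) p 1,
      esymm_succ_eq e i (m + 1 + p)]
    field_simp
    ring

/-- Error of the `p`-th order approximation to the gradient `δ_{k,i} = σ_{k-1}(e_{∖i})`
(Proposition of Appendix B.2.2): the approximation
`δ̃^{(p)}_{k,i} = Σ_{j=0}^p (-1)^j σ_{k+j}(e) / e_i^{j+1}` satisfies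
`|σ_{k-1}(e_{∖i}) - δ̃^{(p)}_{k,i}| = σ_{k+p}(e_{∖i}) / e_i^{p+1}`. -/
theorem esymm_approx_error (n k : ℕ) (hn : 2 ≤ n) (hk1 : 1 ≤ k) (hkn : k ≤ n - 1)
    (e : Fin n → ℝ) (he : ∀ j, 0 < e j) (i : Fin n) (p : ℕ) (hp : p ≤ n - k) :
    |esymm (fun q : {q : Fin n // q ≠ i} => e q) (k - 1)
        - ∑ j ∈ Finset.range (p + 1), (-1 : ℝ) ^ j * esymm e (k + j) / e i ^ (j + 1)|
      = esymm (fun q : {q : Fin n // q ≠ i} => e q) (k + p) / e i ^ (p + 1) := by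
  obtain ⟨m, rfl⟩ := Nat.exists_eq_add_of_le' hk1
  have hnonneg : 0 ≤ esymm (fun q : {q : Fin n // q ≠ i} => e q) (m + 1 + p) :=
    Finset.sum_nonneg fun A _ => Finset.prod_nonneg fun j _ => (he j).le
  rw [Nat.add_sub_cancel, esymm_signed_error e i (he i).ne', abs_mul, abs_pow, abs_neg, abs_one,
    one_pow, one_mul, abs_of_nonneg (div_nonneg hnonneg (pow_pos (he i) _).le)]
end
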